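/- Fix positive reals p₋₁, p₀, p₁ with p₁ > p₋₁ (positive drift), let P(1) = p₋₁ + p₀ + p₁ and δ = p₁ − p₋₁, and set μ = δ/P(1) and σ² = 1 − p₀/P(1) − (δ/P(1))² (which is positive). Let f_{n,h} denote the total weight of Motzkin walks of length n whose height equals h. Then the standardized height converges in distribution to the standard normal law: for every real x, lim_{n→∞} (Σ_{h ≤ μn + xσ√n} f_{n,h})/P(1)ⁿ = Φ(x), where Φ(x) = (1/√(2π)) ∫_{−∞}^x exp(−t²/2) dt. -/

import Mathlib

open scoped BigOperators Classical

/-- Value of a step encoded by `Fin 3`: `0 ↦ -1`, `1 ↦ 0`, `2 ↦ +1`. -/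
def stepVal (s : Fin 3) : ℤ := (s : ℤ) - 1

/-- Weight of a single step: `p₋₁` for `-1`, `p₀` for `0`, `p₁` for `+1`. -/
def stepWeight (pm p0 p1 : ℝ) (s : Fin 3) : ℝ :=
  if s = 0 then pm else if s = 1 then p0 else p1

/-- Weight of a Motzkin walk (product of its step weights). -/
def walkWeight (pm p0 p1 : ℝ) {n : ℕ} (w : Fin n → Fin 3) : ℝ :=
  ∏ i, stepWeight pm p0 p1 (w i)

/-- Partial sum `ω_j` of the walk `w`. -/
def psum {n : ℕ} (w : Fin n → Fin 3) (j : ℕ) : ℤ :=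
  ∑ i ∈ Finset.univ.filter (fun i : Fin n => (i : ℕ) < j), stepVal (w i)

/-- Total weight of Motzkin bridges of length `n`. -/
noncomputable def bridgeW (pm p0 p1 : ℝ) (n : ℕ) : ℝ :=
  ∑ w ∈ Finset.univ.filter (fun w : Fin n → Fin 3 => psum w n = 0),
    walkWeight pm p0 p1 w

/-- Number of returns to zero of a walk of length `n`. -/
def retZero {n : ℕ} (w : Fin n → Fin 3) : ℕ :=
  ((Finset.Icc 1 n).filter (fun j => psum w j = 0)).card

/-- Total weight of walks of length `n` with exactly `k` returns to zero. -/
noncomputable def walkRetW (pm p0 p1 : ℝ) (n k : ℕ) : ℝ :=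
  ∑ w ∈ Finset.univ.filter (fun w : Fin n → Fin 3 => retZero w = k),
    walkWeight pm p0 p1 w

/-- Number of sign changes of a walk of length `n`. -/
def signChanges {n : ℕ} (w : Fin n → Fin 3) : ℕ :=
  (((Finset.range (n+1)) ×ˢ (Finset.range (n+1))).filter
    (fun p => p.1 < p.2 ∧ psum w p.1 * psum w p.2 < 0 ∧
      ∀ l ∈ Finset.Ioo p.1 p.2, psum w l = 0)).card

/-- Total weight of bridges of length `n` with exactly `k` sign changes. -/
noncomputable def bridgeSignW (pm p0 p1 : ℝ) (n k : ℕ) : ℝ :=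
  ∑ w ∈ Finset.univ.filter
      (fun w : Fin n → Fin 3 => psum w n = 0 ∧ signChanges w = k),
    walkWeight pm p0 p1 w

/-- Total weight of positive excursions of length `n`. -/
noncomputable def posExcW (pm p0 p1 : ℝ) (n : ℕ) : ℝ :=
  ∑ w ∈ Finset.univ.filter
      (fun w : Fin n → Fin 3 => psum w n = 0 ∧ ∀ j ∈ Finset.range (n+1), 0 ≤ psum w j),
    walkWeight pm p0 p1 w

/-- Total weight of negative excursions of length `n`. -/
noncomputable def negExcW (pm p0 p1 : ℝ) (n : ℕ) : ℝ :=
  ∑ w ∈ Finset.univ.filter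
      (fun w : Fin n → Fin 3 => psum w n = 0 ∧ ∀ j ∈ Finset.range (n+1), psum w j ≤ 0),
    walkWeight pm p0 p1 w

/-- A positive bridge: a bridge whose last nonzero partial sum is positive. -/
def IsPosBridge {n : ℕ} (w : Fin n → Fin 3) : Prop :=
  psum w n = 0 ∧ ∃ j ∈ Finset.range (n+1),
    0 < psum w j ∧ ∀ l ∈ Finset.Ioc j n, psum w l = 0

/-- A negative bridge: a bridge whose last nonzero partial sum is negative. -/
def IsNegBridge {n : ℕ} (w : Fin n → Fin 3) : Prop :=
  psum w n = 0 ∧ ∃ j ∈ Finset.range (n+1),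
    psum w j < 0 ∧ ∀ l ∈ Finset.Ioc j n, psum w l = 0

instance {n : ℕ} (w : Fin n → Fin 3) : Decidable (IsPosBridge w) := by
  unfold IsPosBridge; infer_instance

instance {n : ℕ} (w : Fin n → Fin 3) : Decidable (IsNegBridge w) := by
  unfold IsNegBridge; infer_instance

/-- Total weight of positive bridges of length `n` with `k` sign changes. -/
noncomputable def posBridgeSignW (pm p0 p1 : ℝ) (n k : ℕ) : ℝ :=
  ∑ w ∈ Finset.univ.filter
      (fun w : Fin n → Fin 3 => IsPosBridge w ∧ signChanges w = k),
    walkWeight pm p0 p1 w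

/-- Total weight of negative bridges of length `n` with `k` sign changes. -/
noncomputable def negBridgeSignW (pm p0 p1 : ℝ) (n k : ℕ) : ℝ :=
  ∑ w ∈ Finset.univ.filter
      (fun w : Fin n → Fin 3 => IsNegBridge w ∧ signChanges w = k),
    walkWeight pm p0 p1 w

/-- Total weight of walks of length `n` with `k` sign changes. -/
noncomputable def walkSignW (pm p0 p1 : ℝ) (n k : ℕ) : ℝ :=
  ∑ w ∈ Finset.univ.filter (fun w : Fin n → Fin 3 => signChanges w = k),
    walkWeight pm p0 p1 w

/-- Height of a walk of length `n` (as a natural number; it is `max_j ω_j ≥ 0`). -/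
def height {n : ℕ} (w : Fin n → Fin 3) : ℕ :=
  (Finset.range (n+1)).sup (fun j => (psum w j).toNat)

/-- Total weight of walks of length `n` of height exactly `h`. -/
noncomputable def heightW (pm p0 p1 : ℝ) (n h : ℕ) : ℝ :=
  ∑ w ∈ Finset.univ.filter (fun w : Fin n → Fin 3 => height w = h),
    walkWeight pm p0 p1 w

open MeasureTheory ProbabilityTheory Filter Topology

/-! ### Partial sums and the height -/

lemma psum_zero {n : ℕ} (w : Fin n → Fin 3) : psum w 0 = 0 := by
  simp [psum]

lemma psum_self {n : ℕ} (w : Fin n → Fin 3) : psum w n = ∑ i, stepVal (w i) := by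
  simp [psum]

lemma stepVal_le_one (s : Fin 3) : stepVal s ≤ 1 := by
  have := s.isLt
  unfold stepVal
  omega

lemma psum_le {n : ℕ} (w : Fin n → Fin 3) (j : ℕ) : psum w j ≤ n := by
  calc psum w j ≤ ∑ i ∈ Finset.univ.filter (fun i : Fin n => (i : ℕ) < j), (1 : ℤ) :=
        Finset.sum_le_sum fun i _ => stepVal_le_one _
    _ = ((Finset.univ.filter (fun i : Fin n => (i : ℕ) < j)).card : ℤ) := by simp
    _ ≤ n := by
        exact_mod_cast (Finset.card_le_univ _).trans (by simp)

lemma height_le {n : ℕ} (w : Fin n → Fin 3) : height w ≤ n :=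
  Finset.sup_le fun j _ => Int.toNat_le.2 (psum_le w j)

lemma psum_le_height {n : ℕ} (w : Fin n → Fin 3) : psum w n ≤ height w :=
  (Int.self_le_toNat _).trans <| by
    exact_mod_cast Finset.le_sup (f := fun j => (psum w j).toNat) (Finset.self_mem_range_succ n)

lemma exists_height_eq_psum {n : ℕ} (w : Fin n → Fin 3) :
    ∃ j ∈ Finset.range (n + 1), (height w : ℤ) = psum w j := by
  obtain ⟨j, hj, h⟩ := Finset.exists_mem_eq_sup (Finset.range (n + 1)) ⟨0, by simp⟩
    (fun j => (psum w j).toNat)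
  rcases le_total 0 (psum w j) with h0 | h0
  · exact ⟨j, hj, by rw [height, h, Int.toNat_of_nonneg h0]⟩
  · exact ⟨0, by simp, by rw [height, h, Int.toNat_of_nonpos h0, psum_zero]; rfl⟩

/-- The total weight of walks with height below a threshold, as a sum over walks. -/
lemma sum_heightW (a b c : ℝ) (n : ℕ) (y : ℝ) :
    ∑ h ∈ (Finset.range (n + 1)).filter (fun h : ℕ => (h : ℝ) ≤ y), heightW a b c n h =
      ∑ w : Fin n → Fin 3 with (height w : ℝ) ≤ y, walkWeight a b c w := by
  have h := Finset.sum_fiberwise_of_maps_to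
    (s := Finset.univ.filter fun w : Fin n → Fin 3 => (height w : ℝ) ≤ y)
    (t := (Finset.range (n + 1)).filter (fun h : ℕ => (h : ℝ) ≤ y)) (g := height)
    (by
      intro w hw
      simp only [Finset.mem_filter, Finset.mem_univ, true_and] at hw
      simp [Nat.lt_succ_of_le (height_le w), hw]) (walkWeight a b c)
  rw [← h]
  refine Finset.sum_congr rfl fun k hk => ?_
  rw [heightW, Finset.filter_filter]
  refine Finset.sum_congr (Finset.filter_congr fun w _ => ?_) fun _ _ => rfl
  simp only [Finset.mem_filter] at hk
  constructor
  · rintro rfl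
    exact ⟨hk.2, rfl⟩
  · exact fun h => h.2

lemma stepWeight_nonneg {a b c : ℝ} (ha : 0 ≤ a) (hb : 0 ≤ b) (hc : 0 ≤ c) (s : Fin 3) :
    0 ≤ stepWeight a b c s := by
  unfold stepWeight
  split_ifs <;> assumption

lemma walkWeight_nonneg {a b c : ℝ} (ha : 0 ≤ a) (hb : 0 ≤ b) (hc : 0 ≤ c) {n : ℕ}
    (w : Fin n → Fin 3) : 0 ≤ walkWeight a b c w :=
  Finset.prod_nonneg fun _ _ => stepWeight_nonneg ha hb hc _

lemma walkWeight_div (a b c r : ℝ) {n : ℕ} (w : Fin n → Fin 3) :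
    walkWeight (a / r) (b / r) (c / r) w = walkWeight a b c w / r ^ n := by
  have h (s : Fin 3) : stepWeight (a / r) (b / r) (c / r) s = stepWeight a b c s / r := by
    unfold stepWeight
    split_ifs <;> rfl
  simp [walkWeight, h, Finset.prod_div_distrib]

/-! ### An exponential moment bound for the distance between height and endpoint -/

lemma zpow_sum₀ {ι G : Type*} [CommGroupWithZero G] {x : G} (hx : x ≠ 0) (s : Finset ι)
    (f : ι → ℤ) : x ^ (∑ i ∈ s, f i) = ∏ i ∈ s, x ^ f i := by
  induction s using Finset.induction_on with
  | empty => simp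
  | insert i s hi ih => rw [Finset.sum_insert hi, Finset.prod_insert hi, zpow_add₀ hx, ih]

/-- The geometric moment of the backward increment `ω_j - ω_n`. -/
lemma sum_walkWeight_mul_zpow (a b c β : ℝ) (hβ : β ≠ 0) (habc : a + b + c = 1) {n j : ℕ}
    (hj : j ≤ n) :
    ∑ w : Fin n → Fin 3, walkWeight a b c w * β ^ (psum w j - psum w n) =
      (a * β + b + c * β⁻¹) ^ (n - j) := by
  have h1 (w : Fin n → Fin 3) : walkWeight a b c w * β ^ (psum w j - psum w n) =
      ∏ i : Fin n, (stepWeight a b c (w i) *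
        if (i : ℕ) < j then 1 else β ^ (-stepVal (w i))) := by
    rw [Finset.prod_mul_distrib, walkWeight, psum_self, psum, Finset.sum_filter,
      ← Finset.sum_sub_distrib]
    congr 1
    rw [zpow_sum₀ hβ]
    refine Finset.prod_congr rfl fun i _ => ?_
    split_ifs <;> simp
  simp_rw [h1]
  rw [← Fintype.piFinset_univ, ← Finset.prod_univ_sum (fun _ => Finset.univ)
    (fun (i : Fin n) (s : Fin 3) => stepWeight a b c s *
        if (i : ℕ) < j then 1 else β ^ (-stepVal s))]
  have h2 (i : Fin n) : ∑ s : Fin 3, stepWeight a b c s *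
        (if (i : ℕ) < j then 1 else β ^ (-stepVal s)) =
      if (i : ℕ) < j then 1 else a * β + b + c * β⁻¹ := by
    split_ifs
    · simp [Fin.sum_univ_three, stepWeight, habc]
    · simp [Fin.sum_univ_three, stepWeight, stepVal]
  simp_rw [h2]
  rw [Finset.prod_ite]
  simp only [Finset.prod_const_one, one_mul, Finset.prod_const]
  congr 1
  have h3 := Finset.card_filter_add_card_filter_not (s := (Finset.univ : Finset (Fin n)))
    (fun i : Fin n => (i : ℕ) < j)
  rw [Fin.card_filter_val_lt, Finset.card_univ, Fintype.card_fin, min_eq_right hj] at h3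
  omega

/-- The distance between height and endpoint has bounded mean. -/
lemma exists_sum_walkWeight_mul_height_sub_le {a b c : ℝ} (ha : 0 < a) (hb : 0 < b)
    (hac : a < c) (habc : a + b + c = 1) :
    ∃ C : ℝ, ∀ n : ℕ, ∑ w : Fin n → Fin 3,
      walkWeight a b c w * ((height w : ℝ) - (psum w n : ℝ)) ≤ C := by
  have hc : 0 < c := ha.trans hac
  obtain ⟨β, hβ1, hφ⟩ : ∃ β : ℝ, 1 < β ∧ a * β + b + c * β⁻¹ < 1 := by
    refine ⟨√(c / a), ?_, ?_⟩
    · rw [Real.lt_sqrt zero_le_one, one_pow, one_lt_div ha]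
      exact hac
    · have hne : √a ≠ 0 := (Real.sqrt_pos.2 ha).ne'
      have hne' : √c ≠ 0 := (Real.sqrt_pos.2 hc).ne'
      have h1 : a * √(c / a) = √a * √c := by
        rw [Real.sqrt_div hc.le]
        field_simp
        rw [Real.sq_sqrt ha.le]
      have h2 : c * (√(c / a))⁻¹ = √a * √c := by
        rw [Real.sqrt_div hc.le]
        field_simp
        rw [Real.sq_sqrt hc.le]
      have h3 : 0 < (√c - √a) ^ 2 :=
        pow_pos (sub_pos.2 (Real.sqrt_lt_sqrt ha.le hac)) 2
      rw [h1, h2]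
      linarith [Real.sq_sqrt ha.le, Real.sq_sqrt hc.le, sub_sq (√c) (√a)]
  have hβ0 : 0 < β := zero_lt_one.trans hβ1
  set φ := a * β + b + c * β⁻¹ with hφdef
  have hφ0 : 0 ≤ φ := by positivity
  refine ⟨(1 - φ)⁻¹ / (β - 1), fun n => ?_⟩
  have hpt (w : Fin n → Fin 3) : ((height w : ℝ) - (psum w n : ℝ)) * (β - 1) ≤
      ∑ j ∈ Finset.range (n + 1), β ^ (psum w j - psum w n) := by
    obtain ⟨j, hj, hh⟩ := exists_height_eq_psum w
    obtain ⟨d, hd⟩ := Int.le.dest (psum_le_height w)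
    have hd' : (height w : ℝ) - (psum w n : ℝ) = d := by
      rw [sub_eq_iff_eq_add']
      exact_mod_cast hd.symm
    calc ((height w : ℝ) - (psum w n : ℝ)) * (β - 1) ≤ β ^ d := by
          rw [hd']
          linarith [one_add_mul_sub_le_pow (a := β) (by linarith) d]
      _ = β ^ (psum w j - psum w n) := by
          rw [← hh, ← hd, add_sub_cancel_left, zpow_natCast]
      _ ≤ _ := Finset.single_le_sum (f := fun j => β ^ (psum w j - psum w n))
          (fun _ _ => by positivity) hj
  rw [le_div_iff₀ (by linarith), Finset.sum_mul]
  calc ∑ w : Fin n → Fin 3, walkWeight a b c w * ((height w : ℝ) - (psum w n : ℝ)) * (β - 1)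
      ≤ ∑ w : Fin n → Fin 3, ∑ j ∈ Finset.range (n + 1),
          walkWeight a b c w * β ^ (psum w j - psum w n) := by
        refine Finset.sum_le_sum fun w _ => ?_
        rw [mul_assoc, ← Finset.mul_sum]
        exact mul_le_mul_of_nonneg_left (hpt w) (walkWeight_nonneg ha.le hb.le hc.le w)
    _ = ∑ j ∈ Finset.range (n + 1), φ ^ (n - j) := by
        rw [Finset.sum_comm]
        refine Finset.sum_congr rfl fun j hj => ?_
        exact sum_walkWeight_mul_zpow a b c β hβ0.ne' habc
          (Nat.le_of_lt_succ (Finset.mem_range.1 hj))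
    _ = ∑ j ∈ Finset.range (n + 1), φ ^ j := Finset.sum_range_reflect (fun j => φ ^ j) (n + 1)
    _ ≤ (1 - φ)⁻¹ := by
        rw [← tsum_geometric_of_lt_one hφ0 hφ]
        exact (summable_geometric_of_lt_one hφ0 hφ).sum_le_tsum _ fun _ _ => by positivity

/-! ### The random walk with independent steps -/

/-- The law of a single step when the weights sum to one. -/
noncomputable def stepLaw (a b c : ℝ) : Measure (Fin 3) :=
  ∑ s : Fin 3, ENNReal.ofReal (stepWeight a b c s) • Measure.dirac s

lemma stepLaw_singleton (a b c : ℝ) (s : Fin 3) :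
    stepLaw a b c {s} = ENNReal.ofReal (stepWeight a b c s) := by
  simp only [stepLaw, Measure.finsetSum_apply, Measure.smul_apply, smul_eq_mul]
  rw [Finset.sum_eq_single s]
  · simp
  · intro t _ hts
    simp [hts]
  · simp

lemma isProbabilityMeasure_stepLaw {a b c : ℝ} (ha : 0 ≤ a) (hb : 0 ≤ b) (hc : 0 ≤ c)
    (habc : a + b + c = 1) : IsProbabilityMeasure (stepLaw a b c) := by
  constructor
  simp only [stepLaw, Measure.finsetSum_apply, Measure.smul_apply, smul_eq_mul, measure_univ,
    mul_one]
  rw [← ENNReal.ofReal_sum_of_nonneg fun s _ => stepWeight_nonneg ha hb hc s]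
  simp [Fin.sum_univ_three, stepWeight, habc]

lemma integral_stepLaw {a b c : ℝ} (ha : 0 ≤ a) (hb : 0 ≤ b) (hc : 0 ≤ c)
    [IsProbabilityMeasure (stepLaw a b c)] (f : Fin 3 → ℝ) :
    ∫ s, f s ∂stepLaw a b c = a * f 0 + b * f 1 + c * f 2 := by
  rw [integral_fintype .of_finite]
  simp [measureReal_def, stepLaw_singleton, ENNReal.toReal_ofReal, stepWeight_nonneg, ha, hb, hc,
    Fin.sum_univ_three]
  simp [stepWeight]

/-- The law of an infinite walk with independent steps. -/
noncomputable def walkLaw (a b c : ℝ) [IsProbabilityMeasure (stepLaw a b c)] :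
    Measure (ℕ → Fin 3) :=
  Measure.infinitePi fun _ => stepLaw a b c

instance (a b c : ℝ) [IsProbabilityMeasure (stepLaw a b c)] :
    IsProbabilityMeasure (walkLaw a b c) :=
  inferInstanceAs (IsProbabilityMeasure (Measure.infinitePi _))

/-- The walk consisting of the first `n` steps. -/
def initialWalk (n : ℕ) (ω : ℕ → Fin 3) : Fin n → Fin 3 := fun i => ω i

lemma measurable_initialWalk (n : ℕ) : Measurable (initialWalk n) := by
  unfold initialWalk
  fun_prop

lemma walkLaw_real_initialWalk {a b c : ℝ} (ha : 0 ≤ a) (hb : 0 ≤ b) (hc : 0 ≤ c)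
    [IsProbabilityMeasure (stepLaw a b c)] (n : ℕ) (p : (Fin n → Fin 3) → Prop) :
    (walkLaw a b c).real {ω | p (initialWalk n ω)} =
      ∑ w : Fin n → Fin 3 with p w, walkWeight a b c w := by
  have hs (w : Fin n → Fin 3) :
      (walkLaw a b c).real (initialWalk n ⁻¹' {w}) = walkWeight a b c w := by
    have hset : initialWalk n ⁻¹' {w} = Set.pi (Finset.range n : Set ℕ)
        (fun i => if h : i < n then {w ⟨i, h⟩} else Set.univ) := by
      ext ω
      simp only [Set.mem_preimage, Set.mem_singleton_iff, Set.mem_pi, Finset.coe_range,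
        Set.mem_Iio, funext_iff, initialWalk]
      constructor
      · intro h i hi
        simpa [hi] using h ⟨i, hi⟩
      · intro h i
        simpa using h i i.2
    rw [hset, measureReal_def, walkLaw, Measure.infinitePi_pi _ (fun _ _ => .of_discrete),
      Finset.prod_range, ENNReal.toReal_prod, walkWeight]
    refine Finset.prod_congr rfl fun i _ => ?_
    simp [stepLaw_singleton, ENNReal.toReal_ofReal (stepWeight_nonneg ha hb hc _)]
  have hset : {ω | p (initialWalk n ω)} =
      ⋃ w ∈ Finset.univ.filter p, initialWalk n ⁻¹' {w} := by
    ext ω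
    simp
  rw [hset, measureReal_biUnion_finset]
  · exact Finset.sum_congr rfl fun w _ => hs w
  · intro w _ w' _ hww'
    exact Disjoint.preimage _ (by simpa using hww')
  · exact fun w _ => measurable_initialWalk n (measurableSet_singleton w)

/-- Central limit theorem for the endpoint of the walk. -/
lemma tendstoInDistribution_psum {a b c : ℝ} (ha : 0 ≤ a) (hb : 0 ≤ b) (hc : 0 ≤ c)
    (habc : a + b + c = 1) (hσ : 0 < 1 - b - (c - a) ^ 2) [IsProbabilityMeasure (stepLaw a b c)] :
    TendstoInDistribution
      (fun (n : ℕ) ω => ((psum (initialWalk n ω) n : ℝ) - (c - a) * n) /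
        (√(1 - b - (c - a) ^ 2) * √n))
      atTop id (fun _ => walkLaw a b c) (gaussianReal 0 1) := by
  set σ := √(1 - b - (c - a) ^ 2) with hσdef
  have hσ0 : 0 < σ := Real.sqrt_pos.2 hσ
  have hσ2 : σ ^ 2 = 1 - b - (c - a) ^ 2 := Real.sq_sqrt hσ.le
  let f : Fin 3 → ℝ := fun s => ((stepVal s : ℝ) - (c - a)) / σ
  have hint (g : Fin 3 → ℝ) : ∫ ω, g (ω 0) ∂walkLaw a b c = a * g 0 + b * g 1 + c * g 2 := by
    rw [← integral_stepLaw ha hb hc g, ← (measurePreserving_eval_infinitePi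
      (fun _ : ℕ => stepLaw a b c) 0).map_eq, integral_map (measurable_pi_apply 0).aemeasurable
      (measurable_of_finite g).aestronglyMeasurable]
    rfl
  have hclt := tendstoInDistribution_inv_sqrt_mul_sum (P := walkLaw a b c)
    (P' := gaussianReal 0 1) (X := fun k ω => f (ω k)) (Y := id) .id
    (by
      rw [hint f]
      simp only [f, stepVal]
      field_simp
      push_cast
      simp
      linear_combination (a - c) * habc)
    (by
      have := hint (fun s => f s ^ 2)
      simp only [Pi.pow_apply]
      rw [this]
      simp only [f, stepVal]
      field_simp
      rw [hσ2]
      push_cast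
      simp
      linear_combination ((c - a) ^ 2 + 1) * habc)
    (iIndepFun_infinitePi fun _ => measurable_of_finite f)
    (fun i => by
      refine IdentDistrib.comp (u := f) 
        ⟨(measurable_pi_apply i).aemeasurable, (measurable_pi_apply 0).aemeasurable, ?_⟩ (measurable_of_finite f)
      exact (measurePreserving_eval_infinitePi (fun _ : ℕ => stepLaw a b c) i).map_eq.trans
        (measurePreserving_eval_infinitePi (fun _ : ℕ => stepLaw a b c) 0).map_eq.symm)
  convert hclt using 3 with n ω
  rw [psum_self, Finset.sum_range]
  simp only [f, initialWalk, ← Finset.sum_div, Finset.sum_sub_distrib]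
  simp
  ring

lemma gaussianReal_real_Iic (x : ℝ) :
    (gaussianReal 0 1).real (Set.Iic x) =
      (√(2 * Real.pi))⁻¹ * ∫ t in Set.Iic x, Real.exp (-t ^ 2 / 2) := by
  rw [measureReal_def, gaussianReal_apply_eq_integral 0 one_ne_zero,
    ENNReal.toReal_ofReal (integral_nonneg fun _ => gaussianPDFReal_nonneg _ _ _),
    ← integral_const_mul]
  simp [gaussianPDFReal]

/-- The limit law for weights summing to one. -/
lemma tendsto_sum_heightW {a b c : ℝ} (ha : 0 < a) (hb : 0 < b) (hac : a < c)
    (habc : a + b + c = 1) (hσ : 0 < 1 - b - (c - a) ^ 2) (x : ℝ) :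
    Tendsto (fun n : ℕ => ∑ h ∈ (Finset.range (n + 1)).filter
        (fun h : ℕ => (h : ℝ) ≤ (c - a) * n + x * √(1 - b - (c - a) ^ 2) * √n),
        heightW a b c n h) atTop
      (𝓝 ((√(2 * Real.pi))⁻¹ * ∫ t in Set.Iic x, Real.exp (-t ^ 2 / 2))) := by
  have hc : 0 < c := ha.trans hac
  have := isProbabilityMeasure_stepLaw ha.le hb.le hc.le habc
  have hclt := tendstoInDistribution_psum ha.le hb.le hc.le habc hσ
  set σ := √(1 - b - (c - a) ^ 2) with hσdef
  have hσ0 : 0 < σ := Real.sqrt_pos.2 hσ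
  obtain ⟨C, hC⟩ := exists_sum_walkWeight_mul_height_sub_le ha hb hac habc
  let Y : ℕ → (ℕ → Fin 3) → ℝ := fun n ω =>
    ((height (initialWalk n ω) : ℝ) - (c - a) * n) / (σ * √n)
  have hdist : TendstoInDistribution Y atTop id (fun _ => walkLaw a b c) (gaussianReal 0 1) := by
    refine tendstoInDistribution_of_tendstoInMeasure_sub Y id hclt ?_ fun n => ?_
    · rw [tendstoInMeasure_iff_measureReal_norm]
      intro ε hε
      have hlim : Tendsto (fun n : ℕ => C / (ε * σ * √n)) atTop (𝓝 0) := by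
        refine Tendsto.const_div_atTop ?_ C
        exact Tendsto.const_mul_atTop (by positivity)
          (Real.tendsto_sqrt_atTop.comp tendsto_natCast_atTop_atTop)
      refine tendsto_of_tendsto_of_tendsto_of_le_of_le' tendsto_const_nhds hlim
        (Eventually.of_forall fun _ => measureReal_nonneg) ?_
      filter_upwards [eventually_gt_atTop 0] with n hn
      have hn' : 0 < √(n : ℝ) := Real.sqrt_pos.2 (by exact_mod_cast hn)
      have hset : {ω | ε ≤ ‖(Y - fun (n : ℕ) ω => ((psum (initialWalk n ω) n : ℝ) - (c - a) * n) /
          (σ * √n)) n ω - (0 : ℕ → (ℕ → Fin 3) → ℝ) n ω‖} =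
          {ω | ε * σ * √n ≤ (height (initialWalk n ω) : ℝ) - (psum (initialWalk n ω) n : ℝ)} := by
        ext ω
        have h0 : (0 : ℝ) ≤ (height (initialWalk n ω) : ℝ) - (psum (initialWalk n ω) n : ℝ) :=
          sub_nonneg.2 (by exact_mod_cast psum_le_height _)
        simp only [Set.mem_ofPred_eq, Pi.sub_apply, Pi.zero_apply, sub_zero, Y, ← sub_div,
          sub_sub_sub_cancel_right]
        rw [Real.norm_of_nonneg (by positivity), le_div_iff₀ (by positivity), mul_assoc]
      have hset' := congrArg (walkLaw a b c).real hset
      refine (hset'.trans (walkLaw_real_initialWalk ha.le hb.le hc.le n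
        (fun w => ε * σ * √n ≤ (height w : ℝ) - (psum w n : ℝ)))).trans_le ?_
      rw [le_div_iff₀ (by positivity), Finset.sum_mul]
      refine le_trans ?_ (hC n)
      rw [Finset.sum_filter]
      refine Finset.sum_le_sum fun w _ => ?_
      have hw := walkWeight_nonneg ha.le hb.le hc.le w
      split_ifs with h
      · exact mul_le_mul_of_nonneg_left h hw
      · exact mul_nonneg hw (sub_nonneg.2 (by exact_mod_cast psum_le_height _))
    · exact ((measurable_of_finite fun w : Fin n → Fin 3 =>
        ((height w : ℝ) - (c - a) * n) / (σ * √n)).comp (measurable_initialWalk n)).aemeasurable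
  have hport := ProbabilityMeasure.tendsto_measure_of_null_frontier_of_tendsto' hdist.tendsto
    (E := Set.Iic x) (by
      have : NullSingletonClass (gaussianReal 0 1) := nullSingletonClass_gaussianReal one_ne_zero
      simp)
  simp only [ProbabilityMeasure.coe_mk, Measure.map_id] at hport
  rw [← gaussianReal_real_Iic]
  refine ((ENNReal.tendsto_toReal (measure_ne_top _ _)).comp hport).congr' ?_
  filter_upwards [eventually_gt_atTop 0] with n hn
  have hn' : 0 < √(n : ℝ) := Real.sqrt_pos.2 (by exact_mod_cast hn)
  rw [Function.comp_apply, Measure.map_apply_of_aemeasurable (hdist.forall_aemeasurable n)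
    measurableSet_Iic, ← measureReal_def, sum_heightW,
    ← walkLaw_real_initialWalk ha.le hb.le hc.le n
      (fun w => (height w : ℝ) ≤ (c - a) * n + x * σ * √n)]
  congr 1
  ext ω
  simp only [Set.mem_preimage, Set.mem_Iic, Set.mem_ofPred_eq, Y]
  rw [div_le_iff₀ (by positivity), sub_le_iff_le_add', mul_assoc]

/-- **Limit law for the height of Motzkin walks, positive drift**: the standardized
height converges in distribution to the standard normal law. -/
theorem height_normal (pm p0 p1 : ℝ)
    (hpm : 0 < pm) (hp0 : 0 < p0) (hp1 : 0 < p1) (hdrift : pm < p1) :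
    let P1 : ℝ := pm + p0 + p1
    let δ : ℝ := p1 - pm
    let μ : ℝ := δ / P1
    let σ : ℝ := Real.sqrt (1 - p0 / P1 - (δ / P1) ^ 2)
    0 < 1 - p0 / P1 - (δ / P1) ^ 2 ∧
    ∀ x : ℝ,
      Filter.Tendsto
        (fun n : ℕ =>
          (∑ h ∈ (Finset.range (n + 1)).filter
              (fun h : ℕ => (h : ℝ) ≤ μ * n + x * σ * Real.sqrt n),
            heightW pm p0 p1 n h) / P1 ^ n)
        Filter.atTop
        (nhds ((Real.sqrt (2 * Real.pi))⁻¹ *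
          ∫ t in Set.Iic x, Real.exp (-t ^ 2 / 2))) := by
  intro P1 δ μ σ
  have hP : 0 < P1 := by positivity
  have hsum : pm / P1 + p0 / P1 + p1 / P1 = 1 := by
    rw [← add_div, ← add_div, div_self hP.ne']
  have ha : 0 < pm / P1 := div_pos hpm hP
  have hb : 0 < p0 / P1 := div_pos hp0 hP
  have hac : pm / P1 < p1 / P1 := div_lt_div_of_pos_right hdrift hP
  have hδ : δ / P1 = p1 / P1 - pm / P1 := sub_div _ _ _
  have hσ : 0 < 1 - p0 / P1 - (δ / P1) ^ 2 := by
    rw [hδ]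
    nlinarith
  refine ⟨hσ, fun x => ?_⟩
  have h := tendsto_sum_heightW ha hb hac hsum (hδ ▸ hσ) x
  rw [← hδ] at h
  refine h.congr fun n => ?_
  rw [Finset.sum_div]
  refine Finset.sum_congr rfl fun k _ => ?_
  rw [heightW, heightW, Finset.sum_div]
  exact Finset.sum_congr rfl fun w _ => walkWeight_div _ _ _ _ w
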